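/- For every positive integer k and every complex number s with 0 < Re s < 1/4, the Mellin transform ∫_0^∞ φ_k(x) x^{s-1} dx converges and equals (Γ(s)/Γ(1-s)) ∫_1^∞ Δ_k(r) (log r)^{-s} r^{-2} dr, where Γ is the Euler gamma function and the integral on the right converges absolutely. -/

import Mathlib

open scoped Real Topology
open Complex Filter MeasureTheory Finset Asymptotics

/-- The analytic extension of `s ↦ ((s-1) * ζ(s))^k` to `s = 1` (where its value is `1`). -/
noncomputable def zetaPowAux (k : ℕ) : ℂ → ℂ :=
  Function.update (fun s : ℂ => ((s - 1) * riemannZeta s) ^ k) 1 1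

/-- `lam k j` is the Taylor coefficient `λ_{j,k}`, i.e. the `j`-th derivative at `s = 1` of the
analytic extension of `(s-1)^k ζ(s)^k`; these numbers are real, and we record their real part. -/
noncomputable def lam (k j : ℕ) : ℝ :=
  (iteratedDeriv j (zetaPowAux k) 1).re

/-- The Fourier coefficients `ℓ_{n,k}` for `n ≥ -k` (an integer index). -/
noncomputable def ell (k : ℕ) (n : ℤ) : ℝ :=
  if 1 ≤ n then
    (-1 : ℝ) ^ n.toNat *
      ∑ j ∈ Finset.Icc 1 n.toNat,
        ((n.toNat - 1).choose (j - 1) : ℝ) * lam k (j + k) / (Nat.factorial (j + k))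
  else
    (-1 : ℝ) ^ k *
      ∑ j ∈ Finset.range ((k + n).toNat + 1),
        ((k - j).choose (-n).toNat : ℝ) * (-1 : ℝ) ^ j * lam k j / (Nat.factorial j)

/-- The Lindelöf Hypothesis: `ζ(1/2 + it) = O(|t|^ε)` for every `ε > 0`. -/
def LindelofHypothesis : Prop :=
  ∀ ε : ℝ, 0 < ε → ∃ C : ℝ, ∀ t : ℝ, 1 ≤ |t| →
    ‖riemannZeta (1 / 2 + t * Complex.I)‖ ≤ C * |t| ^ ε

/-- `dk k n` is the Piltz divisor function `d_k(n)`: the number of representations of `n` as an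
ordered product of `k` positive integers (the `k`-th Dirichlet-convolution power of `ζ`). -/
noncomputable def dk (k n : ℕ) : ℕ := (ArithmeticFunction.zeta ^ k) n

/-- The coefficients `a_{j,k}` of the polynomial `P_k`. -/
noncomputable def aCoef (k j : ℕ) : ℝ :=
  (-1 : ℝ) ^ (k - 1 - j) *
    ∑ i ∈ Finset.range (k - 1 - j + 1), (-1 : ℝ) ^ i * lam k i / (Nat.factorial i)

/-- The error term `Δ_k(x) = (Σ_{1 ≤ n ≤ x} d_k(n)) - x P_k(log x)` in the Piltz divisor
problem. -/
noncomputable def Deltak (k : ℕ) (x : ℝ) : ℝ :=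
  (∑ n ∈ Finset.Icc 1 ⌊x⌋₊, (dk k n : ℝ)) -
    x * ∑ j ∈ Finset.range k, aCoef k j / (Nat.factorial j) * (Real.log x) ^ j

/-- The `n`-th Laguerre polynomial. -/
noncomputable def laguerre (n : ℕ) (u : ℝ) : ℝ :=
  ∑ j ∈ Finset.range (n + 1), (n.choose j : ℝ) * (-1 : ℝ) ^ j * u ^ j / (Nat.factorial j)

/-- The Bessel function of the first kind of order `0`. -/
noncomputable def besselJ0 (u : ℝ) : ℝ :=
  ∑' m : ℕ, (-1 : ℝ) ^ m * (u / 2) ^ (2 * m) / ((Nat.factorial m : ℝ) ^ 2)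

/-- `φ_k(x) = ∫_1^∞ Δ_k(r) J₀(2 √(x log r)) r⁻² dr`. -/
noncomputable def phik (k : ℕ) (x : ℝ) : ℝ :=
  ∫ r in Set.Ioi (1 : ℝ), Deltak k r * besselJ0 (2 * Real.sqrt (x * Real.log r)) / r ^ 2

/-
On `x ≥ 0` the kernel is `J₀(2√x) = C₀(-x)` with an entire Bessel–Clifford function `C₀`, and
Sonin's energy argument gives `C₀(-x) = O(x ^ (-1 / 4))`, so that its Mellin transform converges
absolutely for `0 < Re s < 1 / 4`. Integrated term by term, the Laplace transform of `C₀(-x)` is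
`p⁻¹ exp(-1 / p)`; taking Mellin transforms of both sides, that of `C₀(-x)` at `s` comes out as
`Γ(s) / Γ(1 - s)`.

By the hyperbola method, applied to the convolution `d_{k + 1} = d_k * 1`, the mean
`x⁻¹ ∑_{n ≤ x} d_k(n)` is `Q(log x) + O(x ^ (-δ))` for some polynomial `Q` and some `δ > 0`. Its
moment against `x ^ (-w - 1)` is `ζ(1 + w) ^ k / (1 + w)`, and the polar part of this function at
`w = 0` forces `Q = P_k`. Hence `Δ_k(r) = O(r ^ (1 - δ))`; Fubini and the scaling `x ↦ x / log r`
then give the identity.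
-/

section ExponentialSeries

variable {𝕜 : Type*} [RCLike 𝕜] {a : ℕ → 𝕜} {C : ℝ}

lemma norm_mul_pow_div_factorial_le (ha : ∀ m, ‖a m‖ ≤ C) (m : ℕ) (z : 𝕜) :
    ‖a m * z ^ m / (m.factorial : 𝕜)‖ ≤ C * (‖z‖ ^ m / m.factorial) := by
  rw [norm_div, norm_mul, norm_pow, RCLike.norm_natCast, mul_div_assoc]
  gcongr
  exact ha m

lemma summable_mul_pow_div_factorial (ha : ∀ m, ‖a m‖ ≤ C) (z : 𝕜) :
    Summable fun m ↦ a m * z ^ m / (m.factorial : 𝕜) :=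
  .of_norm_bounded ((Real.summable_pow_div_factorial ‖z‖).mul_left C)
    fun m ↦ norm_mul_pow_div_factorial_le ha m z

lemma hasDerivAt_tsum_mul_pow_div_factorial (ha : ∀ m, ‖a m‖ ≤ C) (z : 𝕜) :
    HasDerivAt (fun z ↦ ∑' m, a m * z ^ m / (m.factorial : 𝕜))
      (∑' m, a (m + 1) * z ^ m / (m.factorial : 𝕜)) z := by
  set R := ‖z‖ + 1
  have hz : z ∈ Metric.ball 0 R := by simp [R]
  have hC : 0 ≤ C := (norm_nonneg _).trans (ha 0)
  have h_term (m : ℕ) (w : 𝕜) :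
      HasDerivAt (fun w ↦ a (m + 1) * w ^ (m + 1) / ((m + 1).factorial : 𝕜))
        (a (m + 1) * w ^ m / (m.factorial : 𝕜)) w := by
    refine (((hasDerivAt_pow (m + 1) w).const_mul (a (m + 1))).div_const _).congr_deriv ?_
    have hm : (m.factorial : 𝕜) ≠ 0 := Nat.cast_ne_zero.2 m.factorial_ne_zero
    have hm' : (m : 𝕜) + 1 ≠ 0 := Nat.cast_add_one_ne_zero m
    rw [Nat.factorial_succ, Nat.add_sub_cancel]
    push_cast
    field_simp
  have h_bound (m : ℕ) (w : 𝕜) (hw : w ∈ Metric.ball 0 R) :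
      ‖a (m + 1) * w ^ m / (m.factorial : 𝕜)‖ ≤ C * (R ^ m / m.factorial) := by
    refine (norm_mul_pow_div_factorial_le (fun m ↦ ha (m + 1)) m w).trans ?_
    gcongr
    exact (mem_ball_zero_iff.1 hw).le
  have h_sum : Summable fun m ↦ a (m + 1) * z ^ (m + 1) / ((m + 1).factorial : 𝕜) :=
    (summable_mul_pow_div_factorial ha z).comp_injective (add_left_injective 1)
  have h_tail := hasDerivAt_tsum_of_isPreconnected
    ((Real.summable_pow_div_factorial R).mul_left C) Metric.isOpen_ball
    (convex_ball 0 R).isPreconnected (fun m w _ ↦ h_term m w) h_bound hz h_sum hz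
  refine (h_tail.const_add (a 0)).congr_of_eventuallyEq (.of_forall fun w ↦ ?_)
  simpa using (summable_mul_pow_div_factorial ha w).tsum_eq_zero_add

end ExponentialSeries

section BesselClifford

/-- The Bessel–Clifford function `C_j(z) = ∑ z ^ m / (m! (m + j)!)`, an entire function with
`J₀(u) = C₀(-u² / 4)`. -/
noncomputable def besselClifford (j : ℕ) (z : ℝ) : ℝ :=
  ∑' m : ℕ, ((m + j).factorial : ℝ)⁻¹ * z ^ m / m.factorial

lemma norm_inv_factorial_le_one (n : ℕ) : ‖(n.factorial : ℝ)⁻¹‖ ≤ 1 := by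
  rw [norm_inv, RCLike.norm_natCast]
  exact inv_le_one_of_one_le₀ (by exact_mod_cast n.factorial_pos)

lemma summable_besselClifford (j : ℕ) (z : ℝ) :
    Summable fun m : ℕ ↦ ((m + j).factorial : ℝ)⁻¹ * z ^ m / m.factorial :=
  summable_mul_pow_div_factorial (fun _ ↦ norm_inv_factorial_le_one _) z

lemma hasDerivAt_besselClifford (j : ℕ) (z : ℝ) :
    HasDerivAt (besselClifford j) (besselClifford (j + 1) z) z := by
  refine (hasDerivAt_tsum_mul_pow_div_factorial
    (fun m ↦ norm_inv_factorial_le_one (m + j)) z).congr_deriv (tsum_congr fun m ↦ ?_)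
  rw [add_right_comm, add_assoc]

lemma continuous_besselClifford (j : ℕ) : Continuous (besselClifford j) :=
  continuous_iff_continuousAt.2 fun z ↦ (hasDerivAt_besselClifford j z).continuousAt

lemma mul_besselClifford_add_two (j : ℕ) (z : ℝ) :
    z * besselClifford (j + 2) z = besselClifford j z - (j + 1) * besselClifford (j + 1) z := by
  have h_sub := (summable_besselClifford j z).sub
    ((summable_besselClifford (j + 1) z).mul_left ((j : ℝ) + 1))
  have hj : (j.factorial : ℝ) ≠ 0 := Nat.cast_ne_zero.2 j.factorial_ne_zero
  have hj' : (j : ℝ) + 1 ≠ 0 := Nat.cast_add_one_ne_zero j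
  rw [besselClifford, besselClifford, besselClifford, ← tsum_mul_left, ← tsum_mul_left,
    ← (summable_besselClifford j z).tsum_sub ((summable_besselClifford (j + 1) z).mul_left _),
    h_sub.tsum_eq_zero_add]
  have h_zero : ((0 + j).factorial : ℝ)⁻¹ * z ^ 0 / (Nat.factorial 0) -
      (j + 1) * (((0 + (j + 1)).factorial : ℝ)⁻¹ * z ^ 0 / (Nat.factorial 0)) = 0 := by
    rw [zero_add, zero_add, Nat.factorial_succ]
    push_cast
    field_simp
    ring
  rw [h_zero, zero_add]
  refine tsum_congr fun m ↦ ?_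
  rw [show m + (j + 2) = m + j + 1 + 1 by ring, show m + 1 + j = m + j + 1 by ring,
    show m + 1 + (j + 1) = m + j + 1 + 1 by ring, Nat.factorial_succ (m + j + 1),
    Nat.factorial_succ m]
  have hm : (m.factorial : ℝ) ≠ 0 := Nat.cast_ne_zero.2 m.factorial_ne_zero
  have hm' : (m : ℝ) + 1 ≠ 0 := Nat.cast_add_one_ne_zero m
  have hmj : ((m + j + 1).factorial : ℝ) ≠ 0 := Nat.cast_ne_zero.2 (Nat.factorial_ne_zero _)
  have hmj' : (m : ℝ) + j + 1 + 1 ≠ 0 := by positivity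
  push_cast
  field_simp
  ring

lemma besselJ0_eq_besselClifford (u : ℝ) : besselJ0 u = besselClifford 0 (-(u ^ 2 / 4)) := by
  refine tsum_congr fun m ↦ ?_
  have hu : (-(u ^ 2 / 4)) ^ m = (-1) ^ m * (u / 2) ^ (2 * m) := by
    rw [pow_mul, ← mul_pow]
    ring
  rw [hu, add_zero]
  ring

lemma besselJ0_two_mul_sqrt {y : ℝ} (hy : 0 ≤ y) :
    besselJ0 (2 * √y) = besselClifford 0 (-y) := by
  rw [besselJ0_eq_besselClifford, mul_pow, Real.sq_sqrt hy]
  ring_nf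

end BesselClifford

section Sonin

lemma antitoneOn_energy {v v' q q' : ℝ → ℝ} {a : ℝ}
    (hv : ∀ u ∈ Set.Ici a, HasDerivAt v (v' u) u)
    (hv' : ∀ u ∈ Set.Ici a, HasDerivAt v' (-(q u * v u)) u)
    (hq : ∀ u ∈ Set.Ici a, HasDerivAt q (q' u) u) (hq' : ∀ u ∈ Set.Ici a, q' u ≤ 0) :
    AntitoneOn (fun u ↦ v' u ^ 2 + q u * v u ^ 2) (Set.Ici a) := by
  have h_deriv (u : ℝ) (hu : u ∈ Set.Ici a) :
      HasDerivAt (fun u ↦ v' u ^ 2 + q u * v u ^ 2) (q' u * v u ^ 2) u := by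
    refine (((hv' u hu).fun_pow 2).fun_add
      ((hq u hu).fun_mul ((hv u hu).fun_pow 2))).congr_deriv ?_
    push_cast
    ring
  refine antitoneOn_of_hasDerivWithinAt_nonpos (convex_Ici a)
    (fun u hu ↦ (h_deriv u hu).continuousAt.continuousWithinAt)
    (fun u hu ↦ (h_deriv u (interior_subset hu)).hasDerivWithinAt)
    (fun u hu ↦ mul_nonpos_of_nonpos_of_nonneg (hq' u (interior_subset hu)) (sq_nonneg _))

lemma hasDerivAt_besselClifford_neg_sq_div_four (j : ℕ) (u : ℝ) :
    HasDerivAt (fun u ↦ besselClifford j (-(u ^ 2 / 4)))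
      (-(u / 2) * besselClifford (j + 1) (-(u ^ 2 / 4))) u := by
  have h_sq : HasDerivAt (fun u : ℝ ↦ -(u ^ 2 / 4)) (-(u / 2)) u := by
    refine ((hasDerivAt_pow 2 u).div_const 4).neg.congr_deriv ?_
    norm_num
    ring
  exact ((hasDerivAt_besselClifford j _).comp u h_sq).congr_deriv (mul_comm _ _)

-- Liouville's substitution `v = √u J₀(u)` turns Bessel's equation into `v'' = -(1 + 1 / (4 u²)) v`.
lemma hasDerivAt_sqrt_mul_besselClifford_zero {u : ℝ} (hu : 0 < u) :
    HasDerivAt (fun u ↦ √u * besselClifford 0 (-(u ^ 2 / 4)))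
      ((√u)⁻¹ * (besselClifford 0 (-(u ^ 2 / 4)) / 2 -
        u ^ 2 / 2 * besselClifford 1 (-(u ^ 2 / 4)))) u := by
  refine ((Real.hasDerivAt_sqrt hu.ne').fun_mul
    (hasDerivAt_besselClifford_neg_sq_div_four 0 u)).congr_deriv ?_
  field_simp
  rw [Real.sq_sqrt hu.le]
  ring

lemma hasDerivAt_deriv_sqrt_mul_besselClifford_zero {u : ℝ} (hu : 0 < u) :
    HasDerivAt (fun u ↦ (√u)⁻¹ * (besselClifford 0 (-(u ^ 2 / 4)) / 2 -
        u ^ 2 / 2 * besselClifford 1 (-(u ^ 2 / 4))))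
      (-((1 + (u ^ 2)⁻¹ / 4) * (√u * besselClifford 0 (-(u ^ 2 / 4))))) u := by
  have h_sqrt := Real.sqrt_pos.2 hu
  have h_two : √u ^ 2 = u := Real.sq_sqrt hu.le
  have h_four : √u ^ 4 = u ^ 2 := by rw [show 4 = 2 * 2 from rfl, pow_mul, h_two]
  have h_ode := mul_besselClifford_add_two 0 (-(u ^ 2 / 4))
  rw [Nat.cast_zero] at h_ode
  refine (((Real.hasDerivAt_sqrt hu.ne').fun_inv h_sqrt.ne').fun_mul
    (((hasDerivAt_besselClifford_neg_sq_div_four 0 u).div_const 2).fun_sub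
      (((hasDerivAt_pow 2 u).div_const 2).fun_mul
        (hasDerivAt_besselClifford_neg_sq_div_four 1 u)))).congr_deriv ?_
  push_cast
  field_simp
  linear_combination (16 * u ^ 2 + 4) * besselClifford 0 (-(u ^ 2 / 4)) * h_four +
    (4 * u ^ 5 * besselClifford 2 (-(u ^ 2 / 4)) -
      20 * u ^ 3 * besselClifford 1 (-(u ^ 2 / 4))) * h_two - 16 * u ^ 4 * h_ode

lemma exists_mul_besselJ0_sq_le : ∃ C : ℝ, ∀ u : ℝ, 1 ≤ u → u * besselJ0 u ^ 2 ≤ C := by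
  have h_pos (u : ℝ) (hu : u ∈ Set.Ici 1) : 0 < u := zero_lt_one.trans_le hu
  have h_deriv (u : ℝ) (hu : u ∈ Set.Ici 1) :
      HasDerivAt (fun u : ℝ ↦ 1 + (u ^ 2)⁻¹ / 4) (-(2 * u / (u ^ 2) ^ 2 / 4)) u := by
    have hu0 := h_pos u hu
    refine ((((hasDerivAt_pow 2 u).fun_inv (by positivity)).div_const 4).const_add 1).congr_deriv ?_
    norm_num [neg_div]
  have h_anti := antitoneOn_energy
    (fun u hu ↦ hasDerivAt_sqrt_mul_besselClifford_zero (h_pos u hu))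
    (fun u hu ↦ hasDerivAt_deriv_sqrt_mul_besselClifford_zero (h_pos u hu)) h_deriv
    fun u hu ↦ by
      have hu0 := h_pos u hu
      exact neg_nonpos.2 (by positivity)
  refine ⟨_, fun u hu ↦ le_trans ?_ (h_anti Set.self_mem_Ici hu hu)⟩
  calc u * besselJ0 u ^ 2 = (√u * besselClifford 0 (-(u ^ 2 / 4))) ^ 2 := by
        rw [besselJ0_eq_besselClifford, mul_pow, Real.sq_sqrt (h_pos u hu).le]
    _ ≤ (1 + (u ^ 2)⁻¹ / 4) * (√u * besselClifford 0 (-(u ^ 2 / 4))) ^ 2 :=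
        le_mul_of_one_le_left (sq_nonneg _) (le_add_of_nonneg_right (by positivity))
    _ ≤ _ := le_add_of_nonneg_left (sq_nonneg _)

lemma isBigO_besselClifford_zero_neg :
    (fun y : ℝ ↦ besselClifford 0 (-y)) =O[atTop] fun y ↦ y ^ (-(1 / 4) : ℝ) := by
  obtain ⟨C, hC⟩ := exists_mul_besselJ0_sq_le
  refine .of_bound (√C) ?_
  filter_upwards [eventually_ge_atTop 1] with y hy
  have hy0 : 0 < y := zero_lt_one.trans_le hy
  have h := hC (2 * √y) (by linarith [Real.one_le_sqrt.2 hy])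
  rw [besselJ0_two_mul_sqrt hy0.le] at h
  have h_sq : (y ^ (-(1 / 4) : ℝ)) ^ 2 * √y = 1 := by
    rw [Real.sqrt_eq_rpow, ← Real.rpow_natCast, ← Real.rpow_mul hy0.le, ← Real.rpow_add hy0]
    norm_num
  rw [Real.norm_eq_abs, Real.norm_of_nonneg (by positivity)]
  refine abs_le_of_sq_le_sq ?_ (by positivity)
  have h_nonneg : 0 ≤ C := le_trans (by positivity) h
  rw [mul_pow, Real.sq_sqrt h_nonneg, ← mul_le_mul_iff_of_pos_right (Real.sqrt_pos.2 hy0),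
    mul_assoc, h_sq]
  linarith

end Sonin

section MellinIntegral

variable {α : Type*} [MeasurableSpace α] {μ : Measure α} [SFinite μ]
  {g : α → ℂ} {ℓ : α → ℝ} {K : ℝ → ℂ} {s : ℂ}

lemma integral_norm_cpow_smul_comp_mul_left {c : ℝ} (hc : 0 < c) :
    ∫ x in Set.Ioi (0 : ℝ), ‖(x : ℂ) ^ (s - 1) • K (c * x)‖ =
      ‖(c : ℂ) ^ (-s)‖ * ∫ x in Set.Ioi (0 : ℝ), ‖(x : ℂ) ^ (s - 1) • K x‖ := by
  have h_eq (x : ℝ) (hx : x ∈ Set.Ioi 0) : ‖(x : ℂ) ^ (s - 1) • K (c * x)‖ =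
      ‖(c : ℂ) ^ (1 - s)‖ * (fun y : ℝ ↦ ‖(y : ℂ) ^ (s - 1) • K y‖) (c * x) := by
    have hx0 : 0 < x := hx
    have hcx : (c : ℂ) ^ (1 - s) * (c : ℂ) ^ (s - 1) = 1 := by
      rw [← Complex.cpow_add _ _ (by exact_mod_cast hc.ne')]
      simp
    beta_reduce
    rw [Complex.ofReal_mul, Complex.mul_cpow_ofReal_nonneg hc.le hx0.le, ← norm_mul, smul_eq_mul,
      smul_eq_mul, ← mul_assoc, ← mul_assoc, hcx, one_mul]
  rw [setIntegral_congr_fun measurableSet_Ioi h_eq, integral_const_mul,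
    integral_comp_mul_left_Ioi (fun y : ℝ ↦ ‖(y : ℂ) ^ (s - 1) • K y‖) 0 hc, mul_zero, smul_eq_mul,
    ← mul_assoc]
  congr 1
  rw [sub_eq_add_neg, Complex.cpow_add _ _ (by exact_mod_cast hc.ne'), Complex.cpow_one, norm_mul,
    Complex.norm_real, Real.norm_of_nonneg hc.le]
  field_simp

lemma hasMellin_integral_mul_comp_mul_left (hg : AEStronglyMeasurable g μ) (hℓ : AEMeasurable ℓ μ)
    (hℓ_pos : ∀ᵐ a ∂μ, 0 < ℓ a) (hK : Measurable K) (hKs : MellinConvergent K s)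
    (h_int : Integrable (fun a ↦ g a * (ℓ a : ℂ) ^ (-s)) μ) :
    HasMellin (fun x ↦ ∫ a, g a * K (ℓ a * x) ∂μ) s
      ((∫ a, g a * (ℓ a : ℂ) ^ (-s) ∂μ) * mellin K s) := by
  set F : ℝ → α → ℂ := fun x a ↦ g a * ((x : ℂ) ^ (s - 1) • K (ℓ a * x)) with hF
  have h_meas : AEStronglyMeasurable (Function.uncurry F)
      ((volume.restrict (Set.Ioi 0)).prod μ) := by
    have h_pow : Measurable fun p : ℝ × α ↦ (p.1 : ℂ) ^ (s - 1) := by fun_prop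
    exact hg.comp_snd.mul (h_pow.aestronglyMeasurable.smul
      (hK.comp_aemeasurable (hℓ.comp_snd.mul measurable_fst.aemeasurable)).aestronglyMeasurable)
  have h_inner : ∀ᵐ a ∂μ, ∫ x in Set.Ioi 0, F x a = g a * (ℓ a : ℂ) ^ (-s) * mellin K s := by
    filter_upwards [hℓ_pos] with a ha
    rw [hF, integral_const_mul, mul_assoc, ← smul_eq_mul (b := mellin K s),
      ← mellin_comp_mul_left K s ha, mellin]
  have h_F : Integrable (Function.uncurry F) ((volume.restrict (Set.Ioi 0)).prod μ) := by
    rw [integrable_prod_iff' h_meas]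
    constructor
    · filter_upwards [hℓ_pos] with a ha
      exact ((MellinConvergent.comp_mul_left ha).2 hKs).const_mul (g a)
    · refine (h_int.norm.mul_const (∫ x in Set.Ioi (0 : ℝ), ‖(x : ℂ) ^ (s - 1) • K x‖)).congr ?_
      filter_upwards [hℓ_pos] with a ha
      simp only [Function.uncurry_apply_pair, hF, norm_mul (g a)]
      rw [integral_const_mul, integral_norm_cpow_smul_comp_mul_left ha, mul_assoc]
  have h_outer (x : ℝ) : ∫ a, F x a ∂μ = (x : ℂ) ^ (s - 1) • ∫ a, g a * K (ℓ a * x) ∂μ := by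
    rw [smul_eq_mul, ← integral_const_mul]
    simp only [hF, smul_eq_mul, mul_left_comm]
  constructor
  · exact h_F.integral_prod_left.congr (.of_forall h_outer)
  · calc mellin (fun x ↦ ∫ a, g a * K (ℓ a * x) ∂μ) s
        = ∫ x in Set.Ioi (0 : ℝ), ∫ a, F x a ∂μ := by simp only [h_outer, mellin]
      _ = ∫ a, (∫ x in Set.Ioi (0 : ℝ), F x a) ∂μ := integral_integral_swap h_F
      _ = _ := by rw [integral_congr_ae h_inner, integral_mul_const]

end MellinIntegral

section Laplace

lemma integrableOn_pow_mul_exp_neg_mul (m : ℕ) {p : ℝ} (hp : 0 < p) :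
    IntegrableOn (fun y : ℝ ↦ y ^ m * Real.exp (-(p * y))) (Set.Ioi 0) := by
  simpa using integrableOn_rpow_mul_exp_neg_mul_rpow (s := m) (p := 1) (b := p)
    (by linarith [m.cast_nonneg (α := ℝ)]) one_pos hp

lemma integral_pow_mul_exp_neg_mul (m : ℕ) {p : ℝ} (hp : 0 < p) :
    ∫ y in Set.Ioi (0 : ℝ), y ^ m * Real.exp (-(p * y)) = m.factorial / p ^ (m + 1) := by
  have h := Real.integral_rpow_mul_exp_neg_mul_Ioi (a := m + 1) (by positivity) hp
  rw [Real.Gamma_nat_eq_factorial, ← Nat.cast_succ, Real.rpow_natCast] at h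
  simp only [Nat.cast_succ, add_sub_cancel_right, Real.rpow_natCast] at h
  rw [h, one_div, inv_pow, mul_comm, div_eq_mul_inv]

lemma hasSum_integral_tsum_mul_pow_div_factorial_mul_exp {a : ℕ → ℝ} {p : ℝ} (hp : 0 < p)
    (ha : Summable fun m ↦ |a m| / p ^ (m + 1)) :
    HasSum (fun m ↦ a m / p ^ (m + 1))
      (∫ y in Set.Ioi (0 : ℝ), (∑' m, a m * y ^ m / m.factorial) * Real.exp (-(p * y))) := by
  set F : ℕ → ℝ → ℝ := fun m y ↦ a m / m.factorial * (y ^ m * Real.exp (-(p * y)))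
  have h_int (m : ℕ) : IntegrableOn (F m) (Set.Ioi 0) :=
    (integrableOn_pow_mul_exp_neg_mul m hp).const_mul _
  have h_integral (m : ℕ) : ∫ y in Set.Ioi 0, F m y = a m / p ^ (m + 1) := by
    rw [integral_const_mul, integral_pow_mul_exp_neg_mul m hp,
      div_mul_div_cancel₀ (Nat.cast_ne_zero.2 m.factorial_ne_zero)]
  have h_norm (m : ℕ) : ∫ y in Set.Ioi 0, ‖F m y‖ = |a m| / p ^ (m + 1) := by
    have h_eq (y : ℝ) (hy : y ∈ Set.Ioi 0) :
        ‖F m y‖ = |a m| / m.factorial * (y ^ m * Real.exp (-(p * y))) := by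
      have hy0 : 0 < y := hy
      rw [norm_mul, norm_div, RCLike.norm_natCast, Real.norm_eq_abs,
        Real.norm_of_nonneg (by positivity : 0 ≤ y ^ m * Real.exp (-(p * y)))]
    rw [setIntegral_congr_fun measurableSet_Ioi h_eq, integral_const_mul,
      integral_pow_mul_exp_neg_mul m hp,
      div_mul_div_cancel₀ (Nat.cast_ne_zero.2 m.factorial_ne_zero)]
  have h_sum := hasSum_integral_of_summable_integral_norm h_int (by simpa only [h_norm] using ha)
  have h_tsum (y : ℝ) : (∑' m, a m * y ^ m / m.factorial) * Real.exp (-(p * y)) = ∑' m, F m y := by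
    rw [← tsum_mul_right]
    exact tsum_congr fun m ↦ by ring
  simpa only [h_integral, h_tsum] using h_sum

lemma integral_besselClifford_zero_neg_mul_exp {p : ℝ} (hp : 0 < p) :
    ∫ y in Set.Ioi (0 : ℝ), besselClifford 0 (-y) * Real.exp (-(p * y)) =
      p⁻¹ * Real.exp (-p⁻¹) := by
  have h_summable : Summable fun m : ℕ ↦ |(-1) ^ m / (m.factorial : ℝ)| / p ^ (m + 1) := by
    refine ((Real.summable_pow_div_factorial p⁻¹).mul_left p⁻¹).congr fun m ↦ ?_
    rw [abs_div, abs_neg_one_pow, Nat.abs_cast, pow_succ, inv_pow]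
    field_simp
  have h_exp : HasSum (fun m : ℕ ↦ (-1) ^ m / (m.factorial : ℝ) / p ^ (m + 1))
      (p⁻¹ * Real.exp (-p⁻¹)) := by
    have h_term (m : ℕ) : (-1) ^ m / (m.factorial : ℝ) / p ^ (m + 1) =
        p⁻¹ * ((-p⁻¹) ^ m / m.factorial) := by
      rw [neg_pow p⁻¹, pow_succ, inv_pow]
      field_simp
    simp only [h_term, Real.exp_eq_exp_ℝ]
    exact (NormedSpace.expSeries_div_hasSum_exp (-p⁻¹)).mul_left p⁻¹
  rw [← (hasSum_integral_tsum_mul_pow_div_factorial_mul_exp hp h_summable).unique h_exp]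
  refine integral_congr_ae (.of_forall fun y ↦ ?_)
  simp only [besselClifford]
  congr 1
  refine tsum_congr fun m ↦ ?_
  rw [neg_pow, add_zero]
  ring

lemma mellinConvergent_besselClifford_zero_neg {s : ℂ} (h1 : 0 < s.re) (h2 : s.re < 1 / 4) :
    MellinConvergent (fun y : ℝ ↦ (besselClifford 0 (-y) : ℂ)) s := by
  have h_cont : Continuous fun y : ℝ ↦ (besselClifford 0 (-y) : ℂ) :=
    Complex.continuous_ofReal.comp ((continuous_besselClifford 0).comp continuous_neg)
  refine mellinConvergent_of_isBigO_rpow (a := 1 / 4) (b := 0)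
    (h_cont.locallyIntegrable.locallyIntegrableOn _)
    (isBigO_ofReal_left.2 isBigO_besselClifford_zero_neg) h2 ?_ h1
  simpa using (h_cont.tendsto 0).isBigO_one ℝ |>.mono nhdsWithin_le_nhds

lemma mellin_laplace {f : ℝ → ℂ} {s : ℂ} (hs : s.re < 1)
    (hf : AEStronglyMeasurable f (volume.restrict (Set.Ioi 0))) (hfs : MellinConvergent f s) :
    mellin (fun p ↦ ∫ y in Set.Ioi (0 : ℝ), f y * (Real.exp (-(y * p)) : ℂ)) (1 - s) =
      mellin f s * Complex.Gamma (1 - s) := by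
  have hs' : 0 < (1 - s).re := by simpa using hs
  have h_exp : MellinConvergent (fun y : ℝ ↦ (Real.exp (-y) : ℂ)) (1 - s) := by
    simpa only [MellinConvergent, smul_eq_mul, mul_comm] using Complex.GammaIntegral_convergent hs'
  have h_comm (y : ℝ) : (y : ℂ) ^ (s - 1) • f y = f y * (y : ℂ) ^ (-(1 - s)) := by
    rw [neg_sub, smul_eq_mul, mul_comm]
  rw [(hasMellin_integral_mul_comp_mul_left (ℓ := fun y ↦ y)
    (K := fun y : ℝ ↦ (Real.exp (-y) : ℂ)) hf
    aemeasurable_id (ae_restrict_mem measurableSet_Ioi) (by fun_prop) h_exp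
    (hfs.congr (.of_forall h_comm))).2, Complex.Gamma_eq_integral hs',
    Complex.GammaIntegral_eq_mellin]
  simp only [mellin, h_comm]

lemma mellin_besselClifford_zero_neg {s : ℂ} (h1 : 0 < s.re) (h2 : s.re < 1 / 4) :
    mellin (fun y : ℝ ↦ (besselClifford 0 (-y) : ℂ)) s =
      Complex.Gamma s / Complex.Gamma (1 - s) := by
  have hs : s.re < 1 := by linarith
  have hs' : 0 < (1 - s).re := by simpa using hs
  have h_meas : AEStronglyMeasurable (fun y : ℝ ↦ (besselClifford 0 (-y) : ℂ))
      (volume.restrict (Set.Ioi 0)) :=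
    (Complex.continuous_ofReal.comp
      ((continuous_besselClifford 0).comp continuous_neg)).aestronglyMeasurable
  rw [eq_div_iff (Complex.Gamma_ne_zero_of_re_pos hs'), ← mellin_laplace hs h_meas
    (mellinConvergent_besselClifford_zero_neg h1 h2)]
  calc mellin (fun p ↦ ∫ y in Set.Ioi (0 : ℝ),
          (besselClifford 0 (-y) : ℂ) * (Real.exp (-(y * p)) : ℂ)) (1 - s)
      = mellin (fun p : ℝ ↦ (p : ℂ) ^ (-1 : ℂ) • (Real.exp (-p⁻¹) : ℂ)) (1 - s) := by
        refine setIntegral_congr_fun measurableSet_Ioi fun p hp ↦ ?_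
        have h_laplace := congrArg ((↑) : ℝ → ℂ) (integral_besselClifford_zero_neg_mul_exp hp)
        rw [← integral_complex_ofReal] at h_laplace
        simp only [mul_comm p, Complex.ofReal_mul] at h_laplace
        simp only [h_laplace, Complex.cpow_neg_one, Complex.ofReal_inv, smul_eq_mul]
    _ = mellin (fun p : ℝ ↦ (Real.exp (-p) : ℂ)) s := by
        rw [mellin_cpow_smul, mellin_comp_inv (fun p : ℝ ↦ (Real.exp (-p) : ℂ))]
        congr 1
        ring
    _ = Complex.Gamma s := by
        rw [← Complex.GammaIntegral_eq_mellin, Complex.Gamma_eq_integral h1]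

end Laplace

section PolyLog

lemma isBigO_rpow_rpow_of_le {a b : ℝ} (hab : a ≤ b) :
    (fun x : ℝ ↦ x ^ a) =O[𝓟 (Set.Ici 1)] fun x ↦ x ^ b := by
  refine .of_norm_eventuallyLE (eventually_principal.2 fun x (hx : 1 ≤ x) ↦ ?_)
  simpa only [Real.norm_of_nonneg (by positivity : 0 ≤ x ^ a)] using
    Real.rpow_le_rpow_of_exponent_le hx hab

lemma isBigO_rpow_mul_rpow {f g : ℝ → ℝ} {a b c : ℝ} (hf : f =O[𝓟 (Set.Ici 1)] fun x ↦ x ^ a)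
    (hg : g =O[𝓟 (Set.Ici 1)] fun x ↦ x ^ b) (hc : a + b ≤ c) :
    (fun x ↦ f x * g x) =O[𝓟 (Set.Ici 1)] fun x ↦ x ^ c := by
  refine ((hf.mul hg).congr' .rfl ?_).trans (isBigO_rpow_rpow_of_le hc)
  exact eventually_principal.2 fun x (hx : 1 ≤ x) ↦ (Real.rpow_add (by positivity) a b).symm

lemma isBigO_log_rpow {ε : ℝ} (hε : 0 < ε) :
    Real.log =O[𝓟 (Set.Ici 1)] fun x ↦ x ^ ε := by
  refine isBigO_principal.2 ⟨1 / ε, fun x (hx : 1 ≤ x) ↦ ?_⟩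
  rw [Real.norm_of_nonneg (Real.log_nonneg hx), Real.norm_of_nonneg (by positivity),
    one_div_mul_eq_div]
  exact Real.log_le_rpow_div (by positivity) hε

lemma isBigO_eval_log_rpow (Q : Polynomial ℝ) {ε : ℝ} (hε : 0 < ε) :
    (fun x ↦ Q.eval (Real.log x)) =O[𝓟 (Set.Ici 1)] fun x ↦ x ^ ε := by
  induction Q using Polynomial.induction_on generalizing ε with
  | C c =>
    have h_const : (fun _ ↦ c) =O[𝓟 (Set.Ici 1)] fun x : ℝ ↦ x ^ (0 : ℝ) := by
      simpa only [Real.rpow_zero] using isBigO_const_const c one_ne_zero _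
    simpa only [Polynomial.eval_C] using h_const.trans (isBigO_rpow_rpow_of_le hε.le)
  | add p q hp hq =>
    simpa only [Polynomial.eval_add] using (hp hε).add (hq hε)
  | monomial n c ih =>
    simpa only [pow_succ, ← mul_assoc, Polynomial.eval_mul, Polynomial.eval_X] using
      isBigO_rpow_mul_rpow (ih (half_pos hε)) (isBigO_log_rpow (half_pos hε)) (add_halves ε).le

/-- `f` agrees on `[1, ∞)` with a polynomial in `log x` up to an error `O(x ^ (-δ))`, `δ > 0`.
The summatory function of a multiplicative convolution inherits this behaviour from its factors. -/
def IsPolyLog (f : ℝ → ℝ) : Prop :=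
  ∃ Q : Polynomial ℝ, ∃ δ > (0 : ℝ),
    (fun x ↦ f x - Q.eval (Real.log x)) =O[𝓟 (Set.Ici 1)] fun x ↦ x ^ (-δ)

namespace IsPolyLog

variable {f g : ℝ → ℝ}

lemma congr (hf : IsPolyLog f) (h : ∀ x, 1 ≤ x → f x = g x) : IsPolyLog g := by
  obtain ⟨Q, δ, hδ, hQ⟩ := hf
  refine ⟨Q, δ, hδ, hQ.congr' (eventually_principal.2 fun x hx ↦ ?_) .rfl⟩
  simp only [h x hx]

lemma eval_log (Q : Polynomial ℝ) : IsPolyLog fun x ↦ Q.eval (Real.log x) :=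
  ⟨Q, 1, one_pos, by simpa only [sub_self] using isBigO_zero _ _⟩

lemma const (c : ℝ) : IsPolyLog fun _ ↦ c := by
  simpa only [Polynomial.eval_C] using eval_log (Polynomial.C c)

lemma log : IsPolyLog Real.log := by
  simpa only [Polynomial.eval_X] using eval_log Polynomial.X

lemma of_isBigO {δ : ℝ} (hδ : 0 < δ) (h : f =O[𝓟 (Set.Ici 1)] fun x ↦ x ^ (-δ)) :
    IsPolyLog f :=
  ⟨0, δ, hδ, by simpa only [Polynomial.eval_zero, sub_zero] using h⟩

lemma isBigO_rpow (hf : IsPolyLog f) {ε : ℝ} (hε : 0 < ε) :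
    f =O[𝓟 (Set.Ici 1)] fun x ↦ x ^ ε := by
  obtain ⟨Q, δ, hδ, hQ⟩ := hf
  simpa only [sub_add_cancel] using
    (hQ.trans (isBigO_rpow_rpow_of_le (by linarith))).add (isBigO_eval_log_rpow Q hε)

lemma mul_isBigO (hf : IsPolyLog f) {δ : ℝ} (hδ : 0 < δ)
    (hg : g =O[𝓟 (Set.Ici 1)] fun x ↦ x ^ (-δ)) : IsPolyLog fun x ↦ f x * g x :=
  of_isBigO (half_pos hδ)
    (isBigO_rpow_mul_rpow (hf.isBigO_rpow (half_pos hδ)) hg (by linarith))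

lemma add (hf : IsPolyLog f) (hg : IsPolyLog g) : IsPolyLog fun x ↦ f x + g x := by
  obtain ⟨Q, δ, hδ, hQ⟩ := hf
  obtain ⟨R, η, hη, hR⟩ := hg
  refine ⟨Q + R, min δ η, lt_min hδ hη, ?_⟩
  simpa only [Polynomial.eval_add, add_sub_add_comm] using
    (hQ.trans (isBigO_rpow_rpow_of_le (neg_le_neg (min_le_left δ η)))).add
      (hR.trans (isBigO_rpow_rpow_of_le (neg_le_neg (min_le_right δ η))))

lemma mul (hf : IsPolyLog f) (hg : IsPolyLog g) : IsPolyLog fun x ↦ f x * g x := by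
  obtain ⟨Q, δ, hδ, hQ⟩ := id hf
  obtain ⟨R, η, hη, hR⟩ := id hg
  refine (((hg.mul_isBigO hδ hQ).add ((eval_log Q).mul_isBigO hη hR)).add
    (eval_log (Q * R))).congr fun x _ ↦ ?_
  simp only [Polynomial.eval_mul]
  ring

lemma neg (hf : IsPolyLog f) : IsPolyLog fun x ↦ -f x :=
  ((const (-1)).mul hf).congr fun x _ ↦ neg_one_mul (f x)

lemma sub (hf : IsPolyLog f) (hg : IsPolyLog g) : IsPolyLog fun x ↦ f x - g x := by
  simpa only [sub_eq_add_neg] using hf.add hg.neg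

lemma comp_sqrt (hf : IsPolyLog f) : IsPolyLog fun x ↦ f √x := by
  obtain ⟨Q, δ, hδ, hQ⟩ := hf
  have h_sqrt : Tendsto Real.sqrt (𝓟 (Set.Ici 1)) (𝓟 (Set.Ici 1)) :=
    tendsto_principal_principal.2 fun x hx ↦ Real.one_le_sqrt.2 hx
  refine ⟨Q.comp (Polynomial.C (1 / 2) * Polynomial.X), δ / 2, half_pos hδ,
    (hQ.comp_tendsto h_sqrt).congr' ?_ ?_⟩ <;>
    refine eventually_principal.2 fun x (hx : 1 ≤ x) ↦ ?_
  · have hx0 : 0 ≤ x := by positivity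
    simp only [Function.comp_apply, Polynomial.eval_comp, Polynomial.eval_mul, Polynomial.eval_C,
      Polynomial.eval_X, Real.log_sqrt hx0, one_div_mul_eq_div]
  · have hx0 : 0 ≤ x := by positivity
    rw [Function.comp_apply, Real.sqrt_eq_rpow, ← Real.rpow_mul hx0, ← neg_div,
      one_div_mul_eq_div]

end IsPolyLog

lemma exists_derivative_eq (Q : Polynomial ℝ) : ∃ R : Polynomial ℝ, R.derivative = Q := by
  induction Q using Polynomial.induction_on' with
  | add p q hp hq =>
    obtain ⟨P, rfl⟩ := hp
    obtain ⟨R, rfl⟩ := hq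
    exact ⟨P + R, Polynomial.derivative_add⟩
  | monomial n a =>
    refine ⟨Polynomial.monomial (n + 1) (a / (n + 1)), ?_⟩
    rw [Polynomial.derivative_monomial, Nat.cast_succ, Nat.add_sub_cancel,
      div_mul_cancel₀ a (Nat.cast_add_one_ne_zero n)]

lemma continuousOn_eval_log_div (Q : Polynomial ℝ) :
    ContinuousOn (fun u ↦ Q.eval (Real.log u) / u) (Set.Ici 1) := by
  have h_ne (u : ℝ) (hu : u ∈ Set.Ici 1) : u ≠ 0 := (one_pos.trans_le hu).ne'
  exact (Q.continuous.comp_continuousOn (Real.continuousOn_log.mono h_ne)).div continuousOn_id h_ne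

lemma integral_derivative_eval_log_div (R : Polynomial ℝ) {x : ℝ} (hx : 1 ≤ x) :
    ∫ u in Set.Ioc 1 x, R.derivative.eval (Real.log u) / u = R.eval (Real.log x) - R.eval 0 := by
  have h_subset : Set.uIcc 1 x ⊆ Set.Ici 1 := by
    rw [Set.uIcc_of_le hx]
    exact Set.Icc_subset_Ici_self
  have h_deriv (u : ℝ) (hu : u ∈ Set.uIcc 1 x) : HasDerivAt (fun u ↦ R.eval (Real.log u))
      (R.derivative.eval (Real.log u) / u) u :=
    (R.hasDerivAt (Real.log u)).comp u
      (Real.hasDerivAt_log (one_pos.trans_le (h_subset hu)).ne')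
  rw [← intervalIntegral.integral_of_le hx, intervalIntegral.integral_eq_sub_of_hasDerivAt h_deriv
    ((continuousOn_eval_log_div _).mono h_subset).intervalIntegrable, Real.log_one]

lemma isBigO_div_self {e : ℝ → ℝ} {a : ℝ} (he : e =O[𝓟 (Set.Ici 1)] fun x ↦ x ^ a) :
    (fun u ↦ e u / u) =O[𝓟 (Set.Ici 1)] fun u ↦ u ^ (a - 1) := by
  have h_inv : (fun u : ℝ ↦ u⁻¹) =O[𝓟 (Set.Ici 1)] fun u ↦ u ^ (-1 : ℝ) := by
    simpa only [Real.rpow_neg_one] using isBigO_refl _ _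
  simpa only [div_eq_mul_inv] using isBigO_rpow_mul_rpow he h_inv (sub_eq_add_neg a 1).ge

lemma integrableOn_Ioi_of_isBigO_rpow {e : ℝ → ℝ} (h_meas : Measurable e) {a : ℝ} (ha : a < -1)
    (he : e =O[𝓟 (Set.Ici 1)] fun x ↦ x ^ a) {x : ℝ} (hx : 1 ≤ x) : IntegrableOn e (Set.Ioi x) := by
  obtain ⟨C, hC⟩ := isBigO_principal.1 he
  refine (((integrableOn_Ioi_rpow_of_lt ha (one_pos.trans_le hx)).norm).const_mul C).mono'
    h_meas.aestronglyMeasurable ?_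
  filter_upwards [ae_restrict_mem measurableSet_Ioi] with u hu
  exact hC u (hx.trans (le_of_lt hu))

lemma isBigO_integral_Ioi_of_isBigO_rpow {e : ℝ → ℝ} {a : ℝ} (ha : a < -1)
    (he : e =O[𝓟 (Set.Ici 1)] fun x ↦ x ^ a) :
    (fun x ↦ ∫ u in Set.Ioi x, e u) =O[𝓟 (Set.Ici 1)] fun x ↦ x ^ (a + 1) := by
  obtain ⟨C, hC⟩ := isBigO_principal.1 he
  refine isBigO_principal.2 ⟨C / (-(a + 1)), fun x (hx : 1 ≤ x) ↦ ?_⟩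
  have hx0 : 0 < x := by positivity
  calc ‖∫ u in Set.Ioi x, e u‖ ≤ ∫ u in Set.Ioi x, C * u ^ a := by
        refine norm_integral_le_of_norm_le ((integrableOn_Ioi_rpow_of_lt ha hx0).const_mul C) ?_
        filter_upwards [ae_restrict_mem measurableSet_Ioi] with u (hu : x < u)
        have h_bound := hC u (hx.trans hu.le)
        rwa [Real.norm_of_nonneg (Real.rpow_nonneg (hx0.trans hu).le a)] at h_bound
    _ = C / (-(a + 1)) * ‖x ^ (a + 1)‖ := by
        rw [integral_const_mul, integral_Ioi_rpow_of_lt ha hx0, Real.norm_of_nonneg (by positivity),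
          div_neg, neg_div]
        ring

lemma isPolyLog_integral_of_isBigO_rpow {e : ℝ → ℝ} (h_meas : Measurable e) {a : ℝ} (ha : a < -1)
    (he : e =O[𝓟 (Set.Ici 1)] fun x ↦ x ^ a) : IsPolyLog fun x ↦ ∫ u in Set.Ioc 1 x, e u := by
  have h_tail : IsPolyLog fun x ↦ ∫ u in Set.Ioi x, e u :=
    .of_isBigO (δ := -(a + 1)) (by linarith)
      (by simpa only [neg_neg] using isBigO_integral_Ioi_of_isBigO_rpow ha he)
  refine ((IsPolyLog.const (∫ u in Set.Ioi 1, e u)).sub h_tail).congr fun x (hx : 1 ≤ x) ↦ ?_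
  have h_int {y : ℝ} (hy : 1 ≤ y) := integrableOn_Ioi_of_isBigO_rpow h_meas ha he hy
  rw [sub_eq_iff_eq_add, ← setIntegral_union (Set.Ioc_disjoint_Ioi le_rfl) measurableSet_Ioi
    ((h_int le_rfl).mono_set Set.Ioc_subset_Ioi_self) (h_int hx), Set.Ioc_union_Ioi_eq_Ioi hx]

lemma IsPolyLog.integral_div_self {f : ℝ → ℝ} (hf : IsPolyLog f) (h_meas : Measurable f) :
    IsPolyLog fun x ↦ ∫ u in Set.Ioc 1 x, f u / u := by
  obtain ⟨Q, δ, hδ, hQ⟩ := hf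
  obtain ⟨R, rfl⟩ := exists_derivative_eq Q
  set e : ℝ → ℝ := fun u ↦ (f u - R.derivative.eval (Real.log u)) / u
  have he := isBigO_div_self hQ
  have he_meas : Measurable e :=
    (h_meas.sub (R.derivative.continuous.measurable.comp Real.measurable_log)).div measurable_id
  have hδ1 : -δ - 1 < -1 := by linarith
  refine (((IsPolyLog.eval_log R).sub (.const (R.eval 0))).add
    (isPolyLog_integral_of_isBigO_rpow he_meas hδ1 he)).congr fun x (hx : 1 ≤ x) ↦ ?_
  have h_main : IntegrableOn (fun u ↦ R.derivative.eval (Real.log u) / u) (Set.Ioc 1 x) :=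
    ((continuousOn_eval_log_div _).mono Set.Icc_subset_Ici_self).integrableOn_Icc.mono_set
      Set.Ioc_subset_Icc_self
  have h_error : IntegrableOn e (Set.Ioc 1 x) :=
    (integrableOn_Ioi_of_isBigO_rpow he_meas hδ1 he le_rfl).mono_set Set.Ioc_subset_Ioi_self
  rw [← integral_derivative_eval_log_div R hx, ← integral_add h_main h_error]
  simp only [e, ← add_div, add_sub_cancel]

end PolyLog

section Summatory

/-- The summatory function `x ↦ ∑_{1 ≤ n ≤ x} a n` of an arithmetic function `a`; the value `a 0`
does not enter. -/
noncomputable def summatory (a : ℕ → ℝ) (x : ℝ) : ℝ := ∑ n ∈ Finset.Icc 1 ⌊x⌋₊, a n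

lemma measurable_summatory (a : ℕ → ℝ) : Measurable (summatory a) :=
  (measurable_from_nat (f := fun N : ℕ ↦ ∑ n ∈ Finset.Icc 1 N, a n)).comp Nat.measurable_floor

lemma summatory_nonneg {a : ℕ → ℝ} (ha : ∀ n, 0 ≤ a n) (x : ℝ) : 0 ≤ summatory a x :=
  Finset.sum_nonneg fun n _ ↦ ha n

lemma floor_sqrt_eq_sqrt_floor {x : ℝ} (hx : 0 ≤ x) : ⌊√x⌋₊ = Nat.sqrt ⌊x⌋₊ := by
  refine eq_of_forall_le_iff fun n ↦ ?_
  rw [Nat.le_floor_iff (Real.sqrt_nonneg x), Nat.le_sqrt', Nat.le_floor_iff hx,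
    Real.le_sqrt n.cast_nonneg hx, Nat.cast_pow]

lemma mem_Ioc_sqrt_and_mem_Ioc_div_iff (N a b : ℕ) :
    a ∈ Finset.Ioc N.sqrt N ∧ b ∈ Finset.Ioc 0 (N / a) ↔
    a ∈ Finset.Ioc N.sqrt (N / b) ∧ b ∈ Finset.Ioc 0 N.sqrt := by
  have h_le_sqrt (ha : N.sqrt < a) (hab : a * b ≤ N) : b ≤ N.sqrt := by
    by_contra! hb
    exact (Nat.mul_le_mul ha hb).not_gt (hab.trans_lt N.lt_succ_sqrt)
  simp only [Finset.mem_Ioc]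
  constructor
  · rintro ⟨⟨ha, -⟩, hb0, hb⟩
    have hab := (Nat.le_div_iff_mul_le (Nat.zero_lt_of_lt ha)).1 hb
    rw [mul_comm] at hab
    exact ⟨⟨ha, (Nat.le_div_iff_mul_le hb0).2 hab⟩, hb0, h_le_sqrt ha hab⟩
  · rintro ⟨⟨ha, hab⟩, hb0, -⟩
    have hab := (Nat.le_div_iff_mul_le hb0).1 hab
    exact ⟨⟨ha, (Nat.le_mul_of_pos_right a hb0).trans hab⟩, hb0,
      (Nat.le_div_iff_mul_le (Nat.zero_lt_of_lt ha)).2 (mul_comm a b ▸ hab)⟩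

lemma sum_Ioc_mul_eq_hyperbola {R : Type*} [CommRing R] (f g : ArithmeticFunction R) (N : ℕ) :
    ∑ n ∈ Finset.Ioc 0 N, (f * g) n =
      ∑ n ∈ Finset.Ioc 0 N.sqrt, f n * ∑ m ∈ Finset.Ioc 0 (N / n), g m +
      ∑ n ∈ Finset.Ioc 0 N.sqrt, g n * ∑ m ∈ Finset.Ioc 0 (N / n), f m -
      (∑ n ∈ Finset.Ioc 0 N.sqrt, f n) * ∑ n ∈ Finset.Ioc 0 N.sqrt, g n := by
  have h_swap : ∑ n ∈ Finset.Ioc N.sqrt N, f n * ∑ m ∈ Finset.Ioc 0 (N / n), g m =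
      ∑ n ∈ Finset.Ioc 0 N.sqrt, g n * ∑ m ∈ Finset.Ioc N.sqrt (N / n), f m := by
    simp only [Finset.mul_sum]
    rw [Finset.sum_comm' (mem_Ioc_sqrt_and_mem_Ioc_div_iff N)]
    simp only [mul_comm]
  have h_row (n : ℕ) (hn : n ∈ Finset.Ioc 0 N.sqrt) :
      ∑ m ∈ Finset.Ioc N.sqrt (N / n), f m =
        ∑ m ∈ Finset.Ioc 0 (N / n), f m - ∑ m ∈ Finset.Ioc 0 N.sqrt, f m := by
    rw [eq_sub_iff_add_eq', Finset.sum_Ioc_consecutive _ (Nat.zero_le _)]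
    obtain ⟨hn0, hn⟩ := Finset.mem_Ioc.1 hn
    exact (Nat.le_div_iff_mul_le hn0).2 ((Nat.mul_le_mul_left _ hn).trans N.sqrt_le)
  rw [ArithmeticFunction.sum_Ioc_mul_eq_sum_sum, ← Finset.sum_Ioc_consecutive _ (Nat.zero_le _)
    N.sqrt_le_self, h_swap, add_sub_assoc, Finset.sum_mul_sum, Finset.sum_comm]
  congr 1
  rw [Finset.sum_congr rfl fun n hn ↦ by rw [h_row n hn, mul_sub], Finset.sum_sub_distrib]
  simp only [Finset.mul_sum, mul_comm]

lemma summatory_mul (f g : ArithmeticFunction ℝ) {x : ℝ} (hx : 0 ≤ x) :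
    summatory ⇑(f * g : ArithmeticFunction ℝ) x =
      summatory (fun n ↦ f n * summatory g (x / n)) √x +
      summatory (fun n ↦ g n * summatory f (x / n)) √x - summatory f √x * summatory g √x := by
  have h := sum_Ioc_mul_eq_hyperbola f g ⌊x⌋₊
  simp only [← floor_sqrt_eq_sqrt_floor hx, ← Nat.floor_div_natCast] at h
  exact h

lemma summatory_mul_eq_sub_integral (a : ℕ → ℝ) {h h' : ℝ → ℝ} {x : ℝ}
    (h_deriv : ∀ u, 1 ≤ u → HasDerivAt h (h' u) u) (h_cont : ContinuousOn h' (Set.Ici 1)) :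
    summatory (fun n ↦ a n * h n) x =
      h x * summatory a x - ∫ u in Set.Ioc 1 x, h' u * summatory a u := by
  have h_update (c : ℕ → ℝ) (N : ℕ) :
      ∑ n ∈ Finset.Icc 0 N, Function.update c 0 0 n = ∑ n ∈ Finset.Icc 1 N, c n := by
    rw [Finset.Icc_eq_cons_Ioc N.zero_le, Finset.sum_cons, Function.update_self, zero_add]
    refine Finset.sum_congr rfl fun n hn ↦ ?_
    rw [Function.update_of_ne (Finset.mem_Ioc.1 hn).1.ne']
  have h_mul (n : ℕ) : h n * Function.update a 0 0 n =
      Function.update (fun n : ℕ ↦ a n * h n) 0 0 n := by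
    rcases eq_or_ne n 0 with rfl | hn
    · simp only [Function.update_self, mul_zero]
    · simp only [Function.update_of_ne hn, mul_comm]
  have h_eqOn : Set.EqOn h' (deriv h) (Set.Icc 1 x) := fun u hu ↦ (h_deriv u hu.1).deriv.symm
  have h_abel := sum_mul_eq_sub_integral_mul₀ (Function.update a 0 0) (Function.update_self ..) x
    (fun u hu ↦ (h_deriv u hu.1).differentiableAt)
    (((h_cont.mono Set.Icc_subset_Ici_self).integrableOn_Icc).congr_fun h_eqOn measurableSet_Icc)
  simp only [h_update, h_mul] at h_abel
  rw [summatory, h_abel]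
  congr 1
  refine setIntegral_congr_fun measurableSet_Ioc fun u hu ↦ ?_
  simp only [h_eqOn (Set.Ioc_subset_Icc_self hu), summatory]

lemma isPolyLog_summatory_div {a : ℕ → ℝ} (ha : IsPolyLog fun x ↦ summatory a x / x) :
    IsPolyLog (summatory fun n ↦ a n / n) := by
  refine (ha.add (ha.integral_div_self ((measurable_summatory a).div measurable_id))).congr
    fun x _ ↦ ?_
  have h_cont : ContinuousOn (fun u : ℝ ↦ -(u ^ 2)⁻¹) (Set.Ici 1) :=
    (ContinuousOn.inv₀ (by fun_prop) fun u hu ↦ pow_ne_zero 2 (one_pos.trans_le hu).ne').neg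
  have h_abel := summatory_mul_eq_sub_integral a (h := fun u ↦ u⁻¹) (x := x)
    (fun u hu ↦ hasDerivAt_inv (one_pos.trans_le hu).ne') h_cont
  simp only [neg_mul, integral_neg, sub_neg_eq_add, ← div_eq_mul_inv, ← div_eq_inv_mul] at h_abel
  simp only [h_abel, div_div, sq]

lemma isPolyLog_summatory_mul_log {b : ℕ → ℝ} (hb : IsPolyLog (summatory b)) :
    IsPolyLog (summatory fun n ↦ b n * Real.log n) := by
  refine ((IsPolyLog.log.mul hb).sub (hb.integral_div_self (measurable_summatory b))).congr
    fun x _ ↦ ?_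
  have h_cont : ContinuousOn (fun u : ℝ ↦ u⁻¹) (Set.Ici 1) :=
    continuousOn_inv₀.mono fun u hu ↦ (one_pos.trans_le hu).ne'
  rw [summatory_mul_eq_sub_integral b
    (fun u hu ↦ Real.hasDerivAt_log (one_pos.trans_le hu).ne') h_cont]
  simp only [← div_eq_inv_mul]

lemma isPolyLog_summatory_mul_eval_log_div (Q : Polynomial ℝ) {b : ℕ → ℝ}
    (hb : IsPolyLog (summatory b)) :
    IsPolyLog fun x ↦ summatory (fun n ↦ b n * Q.eval (Real.log (x / n))) √x := by
  induction Q using Polynomial.induction_on generalizing b with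
  | C c =>
    refine (hb.comp_sqrt.mul (.const c)).congr fun x _ ↦ ?_
    simp only [Polynomial.eval_C, summatory, Finset.sum_mul]
  | add p q hp hq =>
    refine ((hp hb).add (hq hb)).congr fun x _ ↦ ?_
    simp only [Polynomial.eval_add, mul_add, summatory, Finset.sum_add_distrib]
  | monomial i c ih =>
    refine ((IsPolyLog.log.mul (ih hb)).sub (ih (isPolyLog_summatory_mul_log hb))).congr
      fun x hx ↦ ?_
    rw [summatory, summatory, summatory, Finset.mul_sum, ← Finset.sum_sub_distrib]
    refine Finset.sum_congr rfl fun n hn ↦ ?_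
    have hn0 : (n : ℝ) ≠ 0 := Nat.cast_ne_zero.2 (Nat.one_le_iff_ne_zero.1 (Finset.mem_Icc.1 hn).1)
    simp only [pow_succ, ← mul_assoc, Polynomial.eval_mul, Polynomial.eval_X,
      Real.log_div (one_pos.trans_le hx).ne' hn0]
    ring

lemma sqrt_le_div_of_mem_Icc {x : ℝ} {n : ℕ} (hn : n ∈ Finset.Icc 1 ⌊√x⌋₊) : √x ≤ x / n := by
  obtain ⟨hn1, hn⟩ := Finset.mem_Icc.1 hn
  have hn0 : (0 : ℝ) < n := Nat.cast_pos.2 hn1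
  have hx : 0 ≤ x := by
    by_contra! hx
    rw [Real.sqrt_eq_zero_of_nonpos hx.le, Nat.floor_zero] at hn
    omega
  rw [le_div_iff₀ hn0]
  calc √x * n ≤ √x * √x := by
        gcongr
        exact (Nat.le_floor_iff (Real.sqrt_nonneg x)).1 hn
    _ = x := Real.mul_self_sqrt hx

lemma isPolyLog_summatory_mul_comp_div_of_isBigO {b : ℕ → ℝ} (hb0 : ∀ n, 0 ≤ b n)
    (hb : IsPolyLog (summatory b)) {e : ℝ → ℝ} {δ : ℝ} (hδ : 0 < δ)
    (he : e =O[𝓟 (Set.Ici 1)] fun x ↦ x ^ (-δ)) :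
    IsPolyLog fun x ↦ summatory (fun n ↦ b n * e (x / n)) √x := by
  obtain ⟨C, hC0, hC⟩ := he.exists_nonneg
  have h_sqrt (x : ℝ) (hx : 1 ≤ x) : √x ^ (-δ) = x ^ (-(δ / 2)) := by
    rw [Real.sqrt_eq_rpow, ← Real.rpow_mul (by positivity)]
    ring_nf
  have h_bound : (fun x ↦ summatory (fun n ↦ b n * e (x / n)) √x) =O[𝓟 (Set.Ici 1)]
      fun x ↦ summatory b √x * x ^ (-(δ / 2)) := by
    refine isBigO_principal.2 ⟨C, fun x (hx : 1 ≤ x) ↦ ?_⟩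
    rw [Real.norm_of_nonneg (mul_nonneg (summatory_nonneg hb0 _) (by positivity)), summatory,
      summatory, Finset.sum_mul, Finset.mul_sum]
    refine norm_sum_le_of_le _ fun n hn ↦ ?_
    have hn_sqrt := sqrt_le_div_of_mem_Icc hn
    have h_one : 1 ≤ √x := Real.one_le_sqrt.2 hx
    have he_n := isBigOWith_principal.1 hC (x / n) (h_one.trans hn_sqrt)
    rw [Real.norm_of_nonneg (by positivity : 0 ≤ (x / n) ^ (-δ))] at he_n
    calc ‖b n * e (x / n)‖ = b n * ‖e (x / n)‖ := by
          rw [norm_mul, Real.norm_of_nonneg (hb0 n)]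
      _ ≤ b n * (C * √x ^ (-δ)) := by
          have h_rpow := Real.rpow_le_rpow_of_nonpos (by positivity) hn_sqrt (neg_nonpos.2 hδ.le)
          gcongr
          · exact hb0 n
          · exact he_n.trans (by gcongr)
      _ = C * (b n * x ^ (-(δ / 2))) := by
          rw [h_sqrt x hx, mul_left_comm]
  have hδ4 : 0 < δ / 4 := by positivity
  exact .of_isBigO hδ4 (h_bound.trans
    (isBigO_rpow_mul_rpow (hb.comp_sqrt.isBigO_rpow hδ4) (isBigO_refl _ _) (by linarith)))

lemma isPolyLog_summatory_mul_comp_div {b : ℕ → ℝ} (hb0 : ∀ n, 0 ≤ b n)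
    (hb : IsPolyLog (summatory b)) {F : ℝ → ℝ} (hF : IsPolyLog F) :
    IsPolyLog fun x ↦ summatory (fun n ↦ b n * F (x / n)) √x := by
  obtain ⟨Q, δ, hδ, hQ⟩ := hF
  refine ((isPolyLog_summatory_mul_eval_log_div Q hb).add
    (isPolyLog_summatory_mul_comp_div_of_isBigO hb0 hb hδ hQ)).congr fun x _ ↦ ?_
  simp only [summatory, ← Finset.sum_add_distrib, ← mul_add, add_sub_cancel]

lemma isPolyLog_summatory_mul_summatory_div {a c : ℕ → ℝ} (ha0 : ∀ n, 0 ≤ a n)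
    (ha : IsPolyLog fun x ↦ summatory a x / x) (hc : IsPolyLog fun x ↦ summatory c x / x) :
    IsPolyLog fun x ↦ summatory (fun n ↦ a n * summatory c (x / n)) √x / x := by
  refine (isPolyLog_summatory_mul_comp_div (fun n ↦ div_nonneg (ha0 n) n.cast_nonneg)
    (isPolyLog_summatory_div ha) hc).congr fun x hx ↦ ?_
  rw [summatory, summatory, Finset.sum_div]
  refine Finset.sum_congr rfl fun n hn ↦ ?_
  have hn0 : (n : ℝ) ≠ 0 := Nat.cast_ne_zero.2 (Nat.one_le_iff_ne_zero.1 (Finset.mem_Icc.1 hn).1)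
  field_simp

lemma isPolyLog_summatory_mul {f g : ArithmeticFunction ℝ} (hf0 : ∀ n, 0 ≤ f n)
    (hg0 : ∀ n, 0 ≤ g n) (hf : IsPolyLog fun x ↦ summatory f x / x)
    (hg : IsPolyLog fun x ↦ summatory g x / x) :
    IsPolyLog fun x ↦ summatory ⇑(f * g : ArithmeticFunction ℝ) x / x := by
  refine (((isPolyLog_summatory_mul_summatory_div hf0 hf hg).add
    (isPolyLog_summatory_mul_summatory_div hg0 hg hf)).sub
    (hf.comp_sqrt.mul hg.comp_sqrt)).congr fun x hx ↦ ?_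
  have hx0 : 0 ≤ x := by positivity
  rw [summatory_mul f g hx0, div_mul_div_comm, Real.mul_self_sqrt hx0, sub_div, add_div]

lemma isPolyLog_summatory_zeta_div :
    IsPolyLog fun x ↦ summatory (fun n ↦ (ArithmeticFunction.zeta n : ℝ)) x / x := by
  have h_zeta (x : ℝ) : summatory (fun n ↦ (ArithmeticFunction.zeta n : ℝ)) x = ⌊x⌋₊ := by
    rw [summatory, ← Nat.cast_sum]
    exact congrArg _ (ArithmeticFunction.sum_Ioc_zeta ⌊x⌋₊)
  have h_floor : (fun x ↦ (⌊x⌋₊ : ℝ) / x - 1) =O[𝓟 (Set.Ici 1)] fun x ↦ x ^ (-1 : ℝ) := by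
    refine isBigO_principal.2 ⟨1, fun x (hx : 1 ≤ x) ↦ ?_⟩
    have hx0 : 0 < x := by positivity
    rw [Real.rpow_neg_one, one_mul, div_sub_one hx0.ne', div_eq_mul_inv, norm_mul]
    refine mul_le_of_le_one_left (norm_nonneg _) (abs_le.2 ⟨?_, ?_⟩)
    · linarith [Nat.lt_floor_add_one x]
    · linarith [Nat.floor_le hx0.le]
  refine ((IsPolyLog.of_isBigO one_pos h_floor).add (.const 1)).congr fun x _ ↦ ?_
  rw [sub_add_cancel, h_zeta]

lemma isPolyLog_summatory_dk_div (k : ℕ) :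
    IsPolyLog fun x ↦ summatory (fun n ↦ (dk k n : ℝ)) x / x := by
  induction k with
  | zero =>
    have h_one (x : ℝ) (hx : 1 ≤ x) : summatory (fun n ↦ (dk 0 n : ℝ)) x = 1 := by
      simp [summatory, dk, ArithmeticFunction.one_apply, Nat.one_le_floor_iff, hx]
    refine (IsPolyLog.of_isBigO one_pos (isBigO_refl _ _)).congr fun x hx ↦ ?_
    rw [h_one x hx, Real.rpow_neg_one, one_div]
  | succ k ih =>
    refine (isPolyLog_summatory_mul (f := ↑(ArithmeticFunction.zeta ^ k))
      (g := ↑ArithmeticFunction.zeta) (fun n ↦ Nat.cast_nonneg _) (fun n ↦ Nat.cast_nonneg _) ih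
      isPolyLog_summatory_zeta_div).congr fun x _ ↦ ?_
    rw [← ArithmeticFunction.natCoe_mul, ← pow_succ]
    rfl

end Summatory

section LogMoments

variable {p : ℝ}

lemma eqOn_log_rpow_mul_rpow (a p : ℝ) :
    Set.EqOn (fun x ↦ Real.log x ^ a * x ^ (-p - 1))
      (fun x ↦ x⁻¹ • (Real.log x ^ a * Real.exp (-(p * Real.log x)))) (Set.Ioi 1) := by
  intro x (hx : 1 < x)
  have hx0 : 0 < x := by positivity
  have h_exp : Real.exp (-(p * Real.log x)) = x ^ (-p) := by
    rw [Real.rpow_def_of_pos hx0, mul_neg, mul_comm p]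
  simp only [h_exp, Real.rpow_sub_one hx0.ne', smul_eq_mul]
  ring

lemma integrableOn_log_rpow_mul_rpow {a : ℝ} (ha : -1 < a) (hp : 0 < p) :
    IntegrableOn (fun x ↦ Real.log x ^ a * x ^ (-p - 1)) (Set.Ioi 1) := by
  rw [integrableOn_congr_fun (eqOn_log_rpow_mul_rpow a p) measurableSet_Ioi,
    integrableOn_comp_log_Ioi (fun t ↦ t ^ a * Real.exp (-(p * t))) one_pos, Real.log_one]
  simpa only [Real.rpow_one, neg_mul] using
    integrableOn_rpow_mul_exp_neg_mul_rpow ha one_pos hp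

lemma integrableOn_log_pow_mul_rpow (j : ℕ) (hp : 0 < p) :
    IntegrableOn (fun x ↦ Real.log x ^ j * x ^ (-p - 1)) (Set.Ioi 1) := by
  simpa only [Real.rpow_natCast] using
    integrableOn_log_rpow_mul_rpow (a := j) (by linarith [j.cast_nonneg (α := ℝ)]) hp

lemma integral_log_pow_mul_rpow (j : ℕ) (hp : 0 < p) :
    ∫ x in Set.Ioi (1 : ℝ), Real.log x ^ j * x ^ (-p - 1) = j.factorial / p ^ (j + 1) := by
  simp only [← Real.rpow_natCast _ j]
  rw [setIntegral_congr_fun measurableSet_Ioi (eqOn_log_rpow_mul_rpow j p),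
    integral_comp_log_Ioi (fun t ↦ t ^ (j : ℝ) * Real.exp (-(p * t))) one_pos, Real.log_one]
  simpa only [Real.rpow_natCast] using integral_pow_mul_exp_neg_mul j hp

lemma integrableOn_eval_log_mul_rpow (Q : Polynomial ℝ) (hp : 0 < p) :
    IntegrableOn (fun x ↦ Q.eval (Real.log x) * x ^ (-p - 1)) (Set.Ioi 1) := by
  simp only [Polynomial.eval_eq_sum_range, Finset.sum_mul, mul_assoc]
  exact integrable_finsetSum _ fun j _ ↦ (integrableOn_log_pow_mul_rpow j hp).const_mul _

lemma integral_sum_log_pow_mul_rpow (s : Finset ℕ) (b : ℕ → ℝ) (hp : 0 < p) :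
    ∫ x in Set.Ioi (1 : ℝ), (∑ j ∈ s, b j * Real.log x ^ j) * x ^ (-p - 1) =
      ∑ j ∈ s, b j * j.factorial / p ^ (j + 1) := by
  simp only [Finset.sum_mul, mul_assoc]
  rw [integral_finsetSum _ fun j _ ↦ (integrableOn_log_pow_mul_rpow j hp).const_mul _]
  refine Finset.sum_congr rfl fun j _ ↦ ?_
  rw [integral_const_mul, integral_log_pow_mul_rpow j hp, mul_div_assoc]

lemma eq_zero_of_isBigO_integral_eval_log {Q : Polynomial ℝ}
    (h : (fun p : ℝ ↦ ∫ x in Set.Ioi (1 : ℝ), Q.eval (Real.log x) * x ^ (-p - 1))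
      =O[𝓝[>] 0] fun _ ↦ (1 : ℝ)) : Q = 0 := by
  set R : Polynomial ℝ := ∑ j ∈ Finset.range (Q.natDegree + 1),
    Polynomial.monomial (j + 1) (Q.coeff j * j.factorial) with hR
  have h_eval : ∀ᶠ v : ℝ in atTop,
      ∫ x in Set.Ioi (1 : ℝ), Q.eval (Real.log x) * x ^ (-v⁻¹ - 1) = R.eval v := by
    filter_upwards [eventually_gt_atTop 0] with v hv
    simp only [Polynomial.eval_eq_sum_range (p := Q)]
    rw [integral_sum_log_pow_mul_rpow _ _ (inv_pos.2 hv), Polynomial.eval_finsetSum]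
    refine Finset.sum_congr rfl fun j _ ↦ ?_
    rw [Polynomial.eval_monomial, inv_pow, div_inv_eq_mul]
  have h_bdd : IsBoundedUnder (· ≤ ·) atTop fun v ↦ |R.eval v| :=
    (isBigO_one_iff ℝ).1 ((h.comp_tendsto tendsto_inv_atTop_nhdsGT_zero).congr' h_eval .rfl)
  have h_deg : R.natDegree ≤ 0 :=
    Polynomial.natDegree_le_of_degree_le ((Polynomial.isBoundedUnder_abs_atTop_iff R).1 h_bdd)
  ext j
  by_cases hj : j ≤ Q.natDegree
  · have h_coeff : R.coeff (j + 1) = 0 :=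
      Polynomial.coeff_eq_zero_of_natDegree_lt (h_deg.trans_lt j.succ_pos)
    simpa [hR, Polynomial.finsetSum_coeff, Polynomial.coeff_monomial, Nat.lt_succ_iff, hj,
      Nat.factorial_ne_zero] using h_coeff
  · exact Polynomial.coeff_eq_zero_of_natDegree_lt (not_le.1 hj)

lemma isBigO_integral_mul_rpow_of_isBigO {e : ℝ → ℝ} (he : Measurable e) {δ : ℝ} (hδ : 0 < δ)
    (h : e =O[𝓟 (Set.Ici 1)] fun x ↦ x ^ (-δ)) :
    (fun p : ℝ ↦ ∫ x in Set.Ioi (1 : ℝ), e x * x ^ (-p - 1)) =O[𝓝[>] 0] fun _ ↦ (1 : ℝ) := by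
  have h_int : IntegrableOn (fun x ↦ e x * x ^ (-1 : ℝ)) (Set.Ioi 1) :=
    integrableOn_Ioi_of_isBigO_rpow (a := -δ + -1) (by fun_prop) (by linarith)
      (isBigO_rpow_mul_rpow h (isBigO_refl _ _) le_rfl) le_rfl
  refine isBigO_iff.2 ⟨∫ x in Set.Ioi (1 : ℝ), ‖e x * x ^ (-1 : ℝ)‖, ?_⟩
  filter_upwards [self_mem_nhdsWithin] with p (hp : 0 < p)
  rw [norm_one, mul_one]
  refine norm_integral_le_of_norm_le h_int.norm ?_
  filter_upwards [ae_restrict_mem measurableSet_Ioi] with x (hx : 1 < x)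
  rw [norm_mul, norm_mul]
  refine mul_le_mul_of_nonneg_left ?_ (norm_nonneg _)
  rw [Real.norm_of_nonneg (by positivity), Real.norm_of_nonneg (by positivity)]
  exact Real.rpow_le_rpow_of_exponent_le hx.le (by linarith)

lemma eq_of_isBigO_sub_eval_log {f : ℝ → ℝ} (hf : Measurable f) {P Q : Polynomial ℝ} {δ : ℝ}
    (hδ : 0 < δ) (hQ : (fun x ↦ f x - Q.eval (Real.log x)) =O[𝓟 (Set.Ici 1)] fun x ↦ x ^ (-δ))
    (hP : (fun p : ℝ ↦ (∫ x in Set.Ioi (1 : ℝ), f x * x ^ (-p - 1)) -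
      ∫ x in Set.Ioi (1 : ℝ), P.eval (Real.log x) * x ^ (-p - 1)) =O[𝓝[>] 0] fun _ ↦ (1 : ℝ)) :
    Q = P := by
  have h_meas : Measurable fun x ↦ f x - Q.eval (Real.log x) :=
    hf.sub (Q.continuous.measurable.comp Real.measurable_log)
  refine sub_eq_zero.1 (eq_zero_of_isBigO_integral_eval_log
    ((hP.sub (isBigO_integral_mul_rpow_of_isBigO h_meas hδ hQ)).congr' ?_ .rfl))
  filter_upwards [self_mem_nhdsWithin] with p (hp : 0 < p)
  have h_err : IntegrableOn (fun x ↦ (f x - Q.eval (Real.log x)) * x ^ (-p - 1)) (Set.Ioi 1) :=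
    integrableOn_Ioi_of_isBigO_rpow (a := -δ + (-p - 1)) (by fun_prop) (by linarith)
      (isBigO_rpow_mul_rpow hQ (isBigO_refl _ _) le_rfl) le_rfl
  have hQp := integrableOn_eval_log_mul_rpow Q hp
  have h_split : ∫ x in Set.Ioi (1 : ℝ), f x * x ^ (-p - 1) =
      (∫ x in Set.Ioi (1 : ℝ), (f x - Q.eval (Real.log x)) * x ^ (-p - 1)) +
        ∫ x in Set.Ioi (1 : ℝ), Q.eval (Real.log x) * x ^ (-p - 1) := by
    rw [← integral_add h_err hQp]
    simp only [← add_mul, sub_add_cancel]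
  have h_diff : ∫ x in Set.Ioi (1 : ℝ), (Q - P).eval (Real.log x) * x ^ (-p - 1) =
      (∫ x in Set.Ioi (1 : ℝ), Q.eval (Real.log x) * x ^ (-p - 1)) -
        ∫ x in Set.Ioi (1 : ℝ), P.eval (Real.log x) * x ^ (-p - 1) := by
    simp only [Polynomial.eval_sub, sub_mul]
    exact integral_sub hQp (integrableOn_eval_log_mul_rpow P hp)
  rw [h_diff, h_split]
  ring

end LogMoments

section Piltz

lemma analyticAt_zetaPowAux (k : ℕ) : AnalyticAt ℂ (zetaPowAux k) 1 := by
  refine analyticAt_of_differentiable_on_punctured_nhds_of_continuousAt ?_ ?_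
  · filter_upwards [self_mem_nhdsWithin] with s (hs : s ≠ 1)
    have h_diff : DifferentiableAt ℂ (fun s ↦ ((s - 1) * riemannZeta s) ^ k) s :=
      ((differentiableAt_id.sub_const 1).mul (differentiableAt_riemannZeta hs)).pow k
    refine h_diff.congr_of_eventuallyEq ?_
    filter_upwards [isOpen_ne.mem_nhds hs] with z hz
    exact Function.update_of_ne hz _ _
  · rw [zetaPowAux, continuousAt_update_same]
    simpa only [one_pow] using riemannZeta_residue_one.pow k

lemma zetaPowAux_one_add (k : ℕ) {w : ℂ} (hw : w ≠ 0) :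
    zetaPowAux k (1 + w) = w ^ k * riemannZeta (1 + w) ^ k := by
  rw [zetaPowAux, Function.update_of_ne (by simpa using hw), add_sub_cancel_left, mul_pow]

lemma isBigO_re_zetaPowAux_sub_sum (k : ℕ) :
    (fun w : ℝ ↦ (zetaPowAux k (1 + w)).re -
      ∑ i ∈ Finset.range k, lam k i / i.factorial * w ^ i) =O[𝓝 0] fun w ↦ w ^ k := by
  have h_ofReal : Tendsto ((↑) : ℝ → ℂ) (𝓝 0) (𝓝 0) :=
    Complex.continuous_ofReal.tendsto' 0 0 Complex.ofReal_zero
  have h_taylor := ((analyticAt_zetaPowAux k).hasFPowerSeriesAt.isBigO_sub_partialSum_pow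
    k).comp_tendsto h_ofReal
  refine (isBigO_of_le _ fun w ↦ ?_).trans (h_taylor.trans (isBigO_of_le _ fun w ↦ ?_))
  · refine (congrArg norm ?_).trans_le (Complex.abs_re_le_norm _)
    simp only [Function.comp, Complex.sub_re, FormalMultilinearSeries.partialSum, Complex.re_sum]
    congr 1
    refine Finset.sum_congr rfl fun i _ ↦ ?_
    rw [FormalMultilinearSeries.apply_eq_pow_smul_coeff,
      FormalMultilinearSeries.coeff_ofScalars, smul_eq_mul, lam, ← Complex.ofReal_pow,
      Complex.re_ofReal_mul, Complex.div_natCast_re, mul_comm]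
  · simp only [Function.comp, Complex.norm_real, norm_norm, norm_pow, le_refl]

lemma LSeriesHasSum_dk (k : ℕ) {s : ℂ} (hs : 1 < s.re) :
    LSeriesHasSum (fun n ↦ (dk k n : ℂ)) s (riemannZeta s ^ k) := by
  simp only [dk, ← ArithmeticFunction.natCoe_apply (R := ℂ)]
  induction k with
  | zero =>
    have h_term := hasSum_single (f := LSeries.term LSeries.delta s) 1 fun n hn ↦ by
      rw [LSeries.term_delta, if_neg hn]
    rw [LSeries.term_delta, if_pos rfl] at h_term
    simp only [pow_zero, ArithmeticFunction.natCoe_one, ArithmeticFunction.one_eq_delta]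
    exact h_term
  | succ k ih =>
    simp only [pow_succ, ArithmeticFunction.natCoe_mul]
    exact ArithmeticFunction.LSeriesHasSum_mul ih (ArithmeticFunction.LSeriesHasSum_zeta hs)

lemma riemannZeta_one_add_pow_eq_mul_integral (k : ℕ) {w : ℝ} (hw : 0 < w) :
    riemannZeta (1 + w) ^ k = ((1 + w) * ∫ x in Set.Ioi (1 : ℝ),
      summatory (fun n ↦ (dk k n : ℝ)) x / x * x ^ (-w - 1) : ℝ) := by
  have h_re : ((1 : ℂ) + w).re = 1 + w := by simp
  have h_growth : (fun n : ℕ ↦ ∑ m ∈ Finset.Icc 1 n, (dk k m : ℝ)) =O[atTop]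
      fun n : ℕ ↦ (n : ℝ) ^ (1 + w / 2) := by
    obtain ⟨C, hC⟩ := isBigO_principal.1
      ((isPolyLog_summatory_dk_div k).isBigO_rpow (half_pos hw))
    refine isBigO_iff.2 ⟨C, ?_⟩
    filter_upwards [eventually_ge_atTop 1] with n hn
    have hn0 : (0 : ℝ) < n := Nat.cast_pos.2 hn
    have h_le := hC n (Set.mem_Ici.2 (Nat.one_le_cast.2 hn))
    rw [summatory, Nat.floor_natCast, norm_div, Real.norm_of_nonneg hn0.le,
      div_le_iff₀ hn0] at h_le
    rwa [Real.rpow_one_add' hn0.le (by positivity), norm_mul, Real.norm_of_nonneg hn0.le,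
      mul_left_comm, mul_comm]
  have h_series := LSeries_eq_mul_integral_of_nonneg (fun n ↦ (dk k n : ℝ)) (by positivity)
    (s := 1 + w) (by rw [h_re]; linarith) h_growth fun n ↦ by positivity
  simp only [Complex.ofReal_natCast] at h_series
  rw [(LSeriesHasSum_dk k (by rw [h_re]; linarith)).LSeries_eq] at h_series
  rw [h_series, Complex.ofReal_mul, ← integral_complex_ofReal, Complex.ofReal_add,
    Complex.ofReal_one]
  congr 1
  refine setIntegral_congr_fun measurableSet_Ioi fun x (hx : 1 < x) ↦ ?_
  have hx0 : 0 < x := by positivity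
  have h_exponent : -((1 : ℂ) + w + 1) = ((-w - 1 - 1 : ℝ) : ℂ) := by push_cast; ring
  simp only [h_exponent, ← Complex.ofReal_cpow hx0.le, Real.rpow_sub_one hx0.ne' (-w - 1),
    summatory]
  push_cast
  ring

lemma one_add_mul_sum_alternating {R : Type*} [CommRing R] (b : ℕ → R) (w : R) (n : ℕ) :
    (1 + w) * ∑ m ∈ Finset.range n,
        ((-1) ^ m * ∑ i ∈ Finset.range (m + 1), (-1) ^ i * b i) * w ^ m =
      ∑ m ∈ Finset.range n, b m * w ^ m -
        (-1) ^ n * (∑ i ∈ Finset.range n, (-1) ^ i * b i) * w ^ n := by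
  induction n with
  | zero => simp
  | succ n ih =>
    have h_sq : ((-1 : R) ^ n) * (-1) ^ n = 1 := by rw [← mul_pow]; simp
    rw [Finset.sum_range_succ, mul_add, ih]
    simp only [Finset.sum_range_succ _ n, pow_succ]
    linear_combination b n * w ^ n * h_sq

/-- The polynomial `P_k` for which `x * P_k(log x)` is the main term of the Piltz divisor
problem. -/
noncomputable def piltzPoly (k : ℕ) : Polynomial ℝ :=
  ∑ j ∈ Finset.range k, Polynomial.C (aCoef k j / j.factorial) * Polynomial.X ^ j

lemma eval_piltzPoly (k : ℕ) (y : ℝ) :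
    (piltzPoly k).eval y = ∑ j ∈ Finset.range k, aCoef k j / j.factorial * y ^ j := by
  simp only [piltzPoly, Polynomial.eval_finsetSum, Polynomial.eval_C_mul, Polynomial.eval_X_pow]

lemma pow_mul_integral_piltzPoly (k : ℕ) {w : ℝ} (hw : 0 < w) :
    w ^ k * ∫ x in Set.Ioi (1 : ℝ), (piltzPoly k).eval (Real.log x) * x ^ (-w - 1) =
      ∑ m ∈ Finset.range k, ((-1) ^ m *
        ∑ i ∈ Finset.range (m + 1), (-1) ^ i * (lam k i / i.factorial)) * w ^ m := by
  simp only [eval_piltzPoly]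
  rw [integral_sum_log_pow_mul_rpow _ _ hw, Finset.mul_sum,
    ← Finset.sum_range_reflect (fun m ↦ _ * w ^ m)]
  refine Finset.sum_congr rfl fun j hj ↦ ?_
  have h_exponent : k = (k - 1 - j) + (j + 1) := by have := Finset.mem_range.1 hj; omega
  have h_pow : w ^ k = w ^ (k - 1 - j) * w ^ (j + 1) := by rw [← pow_add, ← h_exponent]
  rw [div_mul_cancel₀ _ (Nat.cast_ne_zero.2 j.factorial_ne_zero), h_pow, aCoef]
  simp only [mul_div_assoc]
  field_simp

lemma isBigO_integral_dk_sub_integral_piltzPoly (k : ℕ) :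
    (fun w : ℝ ↦ (∫ x in Set.Ioi (1 : ℝ),
        summatory (fun n ↦ (dk k n : ℝ)) x / x * x ^ (-w - 1)) -
      ∫ x in Set.Ioi (1 : ℝ), (piltzPoly k).eval (Real.log x) * x ^ (-w - 1))
        =O[𝓝[>] 0] fun _ ↦ (1 : ℝ) := by
  set b : ℕ → ℝ := fun i ↦ lam k i / i.factorial
  have h_taylor := ((isBigO_re_zetaPowAux_sub_sum k).mono nhdsWithin_le_nhds).add
    ((isBigO_refl (fun w : ℝ ↦ w ^ k) (𝓝[>] 0)).const_mul_left
      ((-1) ^ k * ∑ i ∈ Finset.range k, (-1) ^ i * b i))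
  have h_inv : (fun w : ℝ ↦ (1 + w)⁻¹ * (w ^ k)⁻¹) =O[𝓝[>] 0] fun w ↦ (w ^ k)⁻¹ := by
    have h_tendsto : Tendsto (fun w : ℝ ↦ (1 + w)⁻¹) (𝓝[>] 0) (𝓝 (1 + 0)⁻¹) :=
      (((continuous_const.add continuous_id).tendsto 0).inv₀ (by simp)).mono_left
        nhdsWithin_le_nhds
    simpa only [one_mul] using (h_tendsto.isBigO_one ℝ).mul (isBigO_refl _ _)
  refine (h_inv.mul h_taylor).congr' ?_ ?_
  · filter_upwards [self_mem_nhdsWithin] with w (hw : 0 < w)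
    have h_alt := one_add_mul_sum_alternating b w k
    rw [← pow_mul_integral_piltzPoly k hw] at h_alt
    rw [zetaPowAux_one_add k (Complex.ofReal_ne_zero.2 hw.ne'),
      riemannZeta_one_add_pow_eq_mul_integral k hw, ← Complex.ofReal_pow, ← Complex.ofReal_mul,
      Complex.ofReal_re, ← mul_inv, inv_mul_eq_iff_eq_mul₀ (by positivity)]
    linear_combination h_alt
  · filter_upwards [self_mem_nhdsWithin] with w (hw : 0 < w)
    exact inv_mul_cancel₀ (pow_pos hw k).ne'

lemma Deltak_eq_mul_sub {x : ℝ} (k : ℕ) (hx : x ≠ 0) : Deltak k x =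
    x * (summatory (fun n ↦ (dk k n : ℝ)) x / x - (piltzPoly k).eval (Real.log x)) := by
  rw [Deltak, eval_piltzPoly, mul_sub, mul_div_cancel₀ _ hx, summatory]

lemma exists_isBigO_Deltak (k : ℕ) :
    ∃ δ > (0 : ℝ), Deltak k =O[𝓟 (Set.Ici 1)] fun x ↦ x ^ (1 - δ) := by
  obtain ⟨Q, δ, hδ, hQ⟩ := isPolyLog_summatory_dk_div k
  obtain rfl : Q = piltzPoly k := eq_of_isBigO_sub_eval_log
    ((measurable_summatory _).div measurable_id) hδ hQ
    (isBigO_integral_dk_sub_integral_piltzPoly k)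
  refine ⟨δ, hδ, (isBigO_rpow_mul_rpow (a := 1) (isBigO_refl _ _) hQ
    (sub_eq_add_neg 1 δ).ge).congr' ?_ .rfl⟩
  refine eventually_principal.2 fun x (hx : 1 ≤ x) ↦ ?_
  simp only [Real.rpow_one, Deltak_eq_mul_sub k (by positivity : x ≠ 0)]

lemma measurable_Deltak (k : ℕ) : Measurable (Deltak k) :=
  (measurable_summatory _).sub (by fun_prop)

lemma integrableOn_Deltak_div_sq_mul_log_cpow (k : ℕ) {s : ℂ} (hs : s.re < 1) :
    IntegrableOn (fun r : ℝ ↦ (Deltak k r / r ^ 2 : ℂ) * (Real.log r : ℂ) ^ (-s))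
      (Set.Ioi 1) := by
  have h_meas := measurable_Deltak k
  obtain ⟨δ, hδ, h_bigO⟩ := exists_isBigO_Deltak k
  obtain ⟨C, hC⟩ := isBigO_principal.1 h_bigO
  refine ((integrableOn_log_rpow_mul_rpow (a := -s.re) (by linarith) hδ).const_mul C).mono'
    (Measurable.aestronglyMeasurable (by fun_prop)) ?_
  filter_upwards [ae_restrict_mem measurableSet_Ioi] with r (hr : 1 < r)
  have hr0 : 0 < r := by positivity
  have h_rpow : r ^ (1 - δ) / r ^ 2 = r ^ (-δ - 1) := by
    rw [← Real.rpow_natCast, ← Real.rpow_sub hr0]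
    congr 1
    push_cast
    ring
  calc ‖(Deltak k r / r ^ 2 : ℂ) * (Real.log r : ℂ) ^ (-s)‖
      = ‖Deltak k r‖ / r ^ 2 * Real.log r ^ (-s.re) := by
        rw [norm_mul, Complex.norm_cpow_eq_rpow_re_of_pos (Real.log_pos hr), Complex.neg_re,
          norm_div, norm_pow, Complex.norm_real, Complex.norm_real, Real.norm_of_nonneg hr0.le]
    _ ≤ C * r ^ (1 - δ) / r ^ 2 * Real.log r ^ (-s.re) := by
        have h_le := hC r hr.le
        rw [Real.norm_of_nonneg (by positivity : 0 ≤ r ^ (1 - δ))] at h_le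
        have := Real.log_pos hr
        gcongr
    _ = C * (Real.log r ^ (-s.re) * r ^ (-δ - 1)) := by rw [mul_div_assoc, h_rpow]; ring

end Piltz

lemma ofReal_phik (k : ℕ) {x : ℝ} (hx : 0 ≤ x) :
    (phik k x : ℂ) = ∫ r in Set.Ioi (1 : ℝ),
      (Deltak k r / r ^ 2 : ℂ) * (besselClifford 0 (-(Real.log r * x)) : ℂ) := by
  rw [phik, ← integral_complex_ofReal]
  refine setIntegral_congr_fun measurableSet_Ioi fun r (hr : 1 < r) ↦ ?_
  have h_log : 0 < Real.log r := Real.log_pos hr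
  rw [besselJ0_two_mul_sqrt (by positivity), mul_comm x]
  push_cast
  ring

theorem stmt18 (k : ℕ) (hk : 0 < k) (s : ℂ) (h1 : 0 < s.re) (h2 : s.re < 1 / 4) :
    IntegrableOn (fun x : ℝ => (phik k x : ℂ) * (x : ℂ) ^ (s - 1)) (Set.Ioi 0) ∧
    IntegrableOn (fun r : ℝ => (Deltak k r : ℂ) * (Real.log r : ℂ) ^ (-s) / (r : ℂ) ^ 2)
      (Set.Ioi 1) ∧
    ∫ x in Set.Ioi (0 : ℝ), (phik k x : ℂ) * (x : ℂ) ^ (s - 1) =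
      (Complex.Gamma s / Complex.Gamma (1 - s)) *
        ∫ r in Set.Ioi (1 : ℝ), (Deltak k r : ℂ) * (Real.log r : ℂ) ^ (-s) / (r : ℂ) ^ 2 := by
  have h_Delta := integrableOn_Deltak_div_sq_mul_log_cpow k (s := s) (by linarith)
  have h_meas := measurable_Deltak k
  have h_bessel := (continuous_besselClifford 0).measurable
  obtain ⟨h_conv, h_mellin⟩ := hasMellin_integral_mul_comp_mul_left (ℓ := Real.log)
    (g := fun r : ℝ ↦ (Deltak k r / r ^ 2 : ℂ)) (μ := volume.restrict (Set.Ioi 1))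
    (Measurable.aestronglyMeasurable (by fun_prop)) Real.measurable_log.aemeasurable
    ((ae_restrict_mem measurableSet_Ioi).mono fun r ↦ Real.log_pos)
    (by fun_prop) (mellinConvergent_besselClifford_zero_neg h1 h2) h_Delta
  have h_phik : Set.EqOn (fun x : ℝ ↦ (x : ℂ) ^ (s - 1) • ∫ r in Set.Ioi (1 : ℝ),
      (Deltak k r / r ^ 2 : ℂ) * (besselClifford 0 (-(Real.log r * x)) : ℂ))
      (fun x ↦ (phik k x : ℂ) * (x : ℂ) ^ (s - 1)) (Set.Ioi 0) := fun x hx ↦ by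
    simp only [ofReal_phik k (le_of_lt hx), smul_eq_mul, mul_comm]
  simp only [mul_div_right_comm]
  refine ⟨h_conv.congr_fun h_phik measurableSet_Ioi, h_Delta, ?_⟩
  rw [← setIntegral_congr_fun measurableSet_Ioi h_phik, ← mellin_besselClifford_zero_neg h1 h2,
    mul_comm, ← h_mellin, mellin]
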